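/- (Proposition 1, optimization form) Let m and k be positive integers, set n = 2^m, and let L : ℝ^n → ℝ be any function (representing the empirical loss of the mixture-of-experts model as a function of the expert weight vector). Then the infimum of L(w) over all w in the probability simplex of ℝ^n with ‖w‖₀ ≤ k equals the infimum of L(q(α,Z)) over all α ∈ ℝ^k and binary matrices Z ∈ {0,1}^{k×m}; moreover, w* attains the first infimum if and only if there exist α, Z with q(α,Z) = w* attaining the second. -/

import Mathlib

/-!
Both optimization problems range over the same set of weight vectors: the gates `q(α, Z)` with
binary `Z` are exactly the `k`-sparse points of the simplex (`feasible_iff_gate`), and everything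
else follows formally from this.

On a binary vector the selector is the indicator of the index whose binary expansion is that vector
(`exists_selector_eq_ite`), so a gate with binary `Z` is the image of a softmax distribution on
`Fin k` under a map `c : Fin k → Fin (2 ^ m)`; this is a probability vector supported on the range
of `c`. Conversely, given a `k`-sparse `w`, choose `c` mapping `Fin k` onto the support of `w` and
split each weight evenly over its fibre: `α t = log (w (c t) / N (c t))`, with `N` the fibre
cardinality. The logarithm is harmless since `w` is positive on its support, and the
exponentials already sum to one.
-/

/-- The single expert selector: for `i : Fin (2^m)` (0-indexed, corresponding to the
paper's 1-indexed expert `i+1`), `r(z)_i = ∏_{j ∈ B(i)} z_j · ∏_{j ∉ B(i)} (1 - z_j)`,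
where `B(i)` is the set of (0-indexed) nonzero bits of `i`. -/
def selector (m : ℕ) (z : Fin m → ℝ) (i : Fin (2 ^ m)) : ℝ :=
  ∏ j : Fin m, if Nat.testBit i.val j.val then z j else 1 - z j

/-- The softmax function `σ(α)_i = exp(α_i) / ∑_j exp(α_j)`. -/
noncomputable def softmax {k : ℕ} (α : Fin k → ℝ) (i : Fin k) : ℝ :=
  Real.exp (α i) / ∑ j : Fin k, Real.exp (α j)

/-- The combinatorial gate `q(α, Z) = ∑_{i=1}^k σ(α)_i · r(z^{(i)})`. -/
noncomputable def gate (m k : ℕ) (α : Fin k → ℝ) (Z : Fin k → Fin m → ℝ)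
    (i : Fin (2 ^ m)) : ℝ :=
  ∑ t : Fin k, softmax α t * selector m (Z t) i

/-- `‖w‖₀`: the number of nonzero entries of `w`. -/
noncomputable def norm0 {n : ℕ} (w : Fin n → ℝ) : ℕ :=
  (Finset.univ.filter fun i => w i ≠ 0).card

/-- The binary expansion of `i`, as a 0/1 vector. -/
def bitVector (m : ℕ) (i : Fin (2 ^ m)) (j : Fin m) : ℝ :=
  if Nat.testBit i.val j.val then 1 else 0

theorem selector_bitVector (m : ℕ) (c i : Fin (2 ^ m)) :
    selector m (bitVector m c) i = if c = i then 1 else 0 := by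
  unfold selector bitVector
  split_ifs with h
  · subst h
    refine Finset.prod_eq_one fun j _ => ?_
    split_ifs <;> simp
  -- Two distinct numbers below `2 ^ m` differ in one of the first `m` bits.
  · have hbit : ∃ j : Fin m, Nat.testBit c.val j.val ≠ Nat.testBit i.val j.val := by
      by_contra! hcon
      refine h (Fin.ext (Nat.eq_of_testBit_eq fun j => ?_))
      by_cases hj : j < m
      · exact hcon ⟨j, hj⟩
      · have hp : 2 ^ m ≤ 2 ^ j := Nat.pow_le_pow_right (by norm_num) (by omega)
        rw [Nat.testBit_lt_two_pow (lt_of_lt_of_le c.isLt hp),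
          Nat.testBit_lt_two_pow (lt_of_lt_of_le i.isLt hp)]
    obtain ⟨j, hj⟩ := hbit
    refine Finset.prod_eq_zero (Finset.mem_univ j) ?_
    cases h1 : Nat.testBit c.val j.val <;> cases h2 : Nat.testBit i.val j.val <;>
      simp_all

theorem exists_selector_eq_ite (m : ℕ) (z : Fin m → ℝ) (hz : ∀ j, z j = 0 ∨ z j = 1) :
    ∃ c : Fin (2 ^ m), ∀ i, selector m z i = if c = i then 1 else 0 := by
  classical
  refine ⟨⟨Nat.ofBits fun j => decide (z j = 1), Nat.ofBits_lt_two_pow _⟩, fun i => ?_⟩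
  rw [← selector_bitVector]
  congr 1
  funext j
  rcases hz j with h | h <;> simp [bitVector, Nat.testBit_ofBits_lt, h]

theorem softmax_nonneg {k : ℕ} (α : Fin k → ℝ) (t : Fin k) : 0 ≤ softmax α t :=
  div_nonneg (Real.exp_pos _).le (Finset.sum_nonneg fun _ _ => (Real.exp_pos _).le)

theorem sum_softmax {k : ℕ} (hk : 0 < k) (α : Fin k → ℝ) : ∑ t, softmax α t = 1 := by
  have : Nonempty (Fin k) := ⟨⟨0, hk⟩⟩
  unfold softmax
  rw [← Finset.sum_div]
  exact div_self (Finset.sum_pos (fun _ _ => Real.exp_pos _) Finset.univ_nonempty).ne'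

theorem gate_feasible (m k : ℕ) (hk : 0 < k) (α : Fin k → ℝ) (Z : Fin k → Fin m → ℝ)
    (hZ : ∀ i j, Z i j = 0 ∨ Z i j = 1) :
    (∀ i, 0 ≤ gate m k α Z i) ∧ ∑ i, gate m k α Z i = 1 ∧ norm0 (gate m k α Z) ≤ k := by
  classical
  choose c hc using fun t => exists_selector_eq_ite m (Z t) (hZ t)
  simp only [gate, hc]
  refine ⟨fun i => Finset.sum_nonneg fun t _ => mul_nonneg (softmax_nonneg α t) ?_, ?_, ?_⟩
  · split_ifs <;> norm_num
  · rw [Finset.sum_comm]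
    simpa using sum_softmax hk α
  · have hsub : (Finset.univ.filter fun i => gate m k α Z i ≠ 0) ⊆ Finset.univ.image c := by
      intro i hi
      obtain ⟨t, -, ht⟩ := Finset.exists_ne_zero_of_sum_ne_zero (Finset.mem_filter.1 hi).2
      rw [hc] at ht
      refine Finset.mem_image.2 ⟨t, Finset.mem_univ t, ?_⟩
      by_contra hne
      simp [hne] at ht
    have hcard := (Finset.card_le_card hsub).trans Finset.card_image_le
    simpa [norm0, gate, hc] using hcard

theorem exists_gate_eq (m k : ℕ) (w : Fin (2 ^ m) → ℝ)
    (h0 : ∀ i, 0 ≤ w i) (h1 : ∑ i, w i = 1) (hs : norm0 w ≤ k) :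
    ∃ (α : Fin k → ℝ) (Z : Fin k → Fin m → ℝ),
      (∀ i j, Z i j = 0 ∨ Z i j = 1) ∧ gate m k α Z = w := by
  classical
  let S := {i // w i ≠ 0}
  have hS : Nonempty S := by
    obtain ⟨i, -, hi⟩ := Finset.exists_ne_zero_of_sum_ne_zero (s := Finset.univ) (f := w)
      (by rw [h1]; exact one_ne_zero)
    exact ⟨⟨i, hi⟩⟩
  have hcard : Fintype.card S ≤ Fintype.card (Fin k) := by
    rw [Fintype.card_subtype, Fintype.card_fin]
    exact hs
  obtain ⟨e⟩ := Function.Embedding.nonempty_of_card_le hcard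
  let c : Fin k → S := Function.invFun e
  have hc : Function.Surjective c := Function.invFun_surjective e.injective
  let N : Fin (2 ^ m) → ℕ := fun i => (Finset.univ.filter fun t => (c t : Fin (2 ^ m)) = i).card
  let β : Fin k → ℝ := fun t => w (c t) / N (c t)
  have hβ : ∀ t, 0 < β t := by
    intro t
    refine div_pos (lt_of_le_of_ne (h0 _) (c t).2.symm) (Nat.cast_pos.2 ?_)
    exact Finset.card_pos.2 ⟨t, by simp⟩
  have hfib : ∀ i, ∑ t, β t * (if (c t : Fin (2 ^ m)) = i then 1 else 0) = w i := by
    intro i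
    have hconst : ∀ t, β t * (if (c t : Fin (2 ^ m)) = i then 1 else 0) =
        if (c t : Fin (2 ^ m)) = i then w i / N i else 0 := by
      intro t
      split_ifs with h
      · simp only [β, h, mul_one]
      · simp
    simp only [hconst]
    rw [← Finset.sum_filter, Finset.sum_const, nsmul_eq_mul]
    change (N i : ℝ) * (w i / N i) = w i
    by_cases hi : w i = 0
    · simp [hi]
    · obtain ⟨t, ht⟩ := hc ⟨i, hi⟩
      have hN : (N i : ℝ) ≠ 0 :=
        Nat.cast_ne_zero.2 (Finset.card_pos.2 ⟨t, by simp [ht]⟩).ne'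
      field_simp
  have hsum : ∑ t, β t = 1 := by
    rw [← h1, ← Finset.sum_congr rfl fun i _ => hfib i, Finset.sum_comm]
    simp
  refine ⟨fun t => Real.log (β t), fun t => bitVector m (c t), fun t j => ?_, ?_⟩
  · dsimp only [bitVector]
    split_ifs <;> simp
  · funext i
    rw [← hfib i]
    simp only [gate, softmax, Real.exp_log (hβ _), hsum, div_one, selector_bitVector]

theorem feasible_iff_gate (m k : ℕ) (hk : 0 < k) (w : Fin (2 ^ m) → ℝ) :
    ((∀ i, 0 ≤ w i) ∧ ∑ i, w i = 1 ∧ norm0 w ≤ k) ↔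
      ∃ (α : Fin k → ℝ) (Z : Fin k → Fin m → ℝ),
        (∀ i j, Z i j = 0 ∨ Z i j = 1) ∧ gate m k α Z = w := by
  constructor
  · rintro ⟨h0, h1, hs⟩
    exact exists_gate_eq m k w h0 h1 hs
  · rintro ⟨α, Z, hZ, rfl⟩
    exact gate_feasible m k hk α Z hZ

/-- Proposition 1, optimization form: for any loss `L : ℝ^(2^m) → ℝ`,
the infimum of `L` over `k`-sparse probability vectors equals the infimum of
`L ∘ q` over unconstrained weights and binary codes; moreover, `w` attains the first
infimum iff some `(α, Z)` with `q(α, Z) = w` attains the second. -/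
theorem gate_optimization_equivalence (m k : ℕ) (hm : 0 < m) (hk : 0 < k)
    (L : (Fin (2 ^ m) → ℝ) → ℝ) :
    sInf {y : ℝ | ∃ w : Fin (2 ^ m) → ℝ,
        ((∀ i, 0 ≤ w i) ∧ ∑ i : Fin (2 ^ m), w i = 1 ∧ norm0 w ≤ k) ∧ y = L w} =
      sInf {y : ℝ | ∃ (α : Fin k → ℝ) (Z : Fin k → Fin m → ℝ),
        (∀ i j, Z i j = 0 ∨ Z i j = 1) ∧ y = L (gate m k α Z)} ∧
    ∀ w : Fin (2 ^ m) → ℝ,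
      (((∀ i, 0 ≤ w i) ∧ ∑ i : Fin (2 ^ m), w i = 1 ∧ norm0 w ≤ k) ∧
        (∀ w' : Fin (2 ^ m) → ℝ,
          ((∀ i, 0 ≤ w' i) ∧ ∑ i : Fin (2 ^ m), w' i = 1 ∧ norm0 w' ≤ k) →
            L w ≤ L w')) ↔
      (∃ (α : Fin k → ℝ) (Z : Fin k → Fin m → ℝ),
        (∀ i j, Z i j = 0 ∨ Z i j = 1) ∧ gate m k α Z = w ∧
        ∀ (α' : Fin k → ℝ) (Z' : Fin k → Fin m → ℝ),
          (∀ i j, Z' i j = 0 ∨ Z' i j = 1) →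
            L (gate m k α Z) ≤ L (gate m k α' Z')) := by
  simp only [feasible_iff_gate m k hk]
  refine ⟨?_, fun w => ⟨?_, ?_⟩⟩
  · congr 1
    ext y
    constructor
    · rintro ⟨w, ⟨α, Z, hZ, rfl⟩, rfl⟩
      exact ⟨α, Z, hZ, rfl⟩
    · rintro ⟨α, Z, hZ, rfl⟩
      exact ⟨_, ⟨α, Z, hZ, rfl⟩, rfl⟩
  · rintro ⟨⟨α, Z, hZ, rfl⟩, hmin⟩
    exact ⟨α, Z, hZ, rfl, fun α' Z' hZ' => hmin _ ⟨α', Z', hZ', rfl⟩⟩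
  · rintro ⟨α, Z, hZ, rfl, hmin⟩
    refine ⟨⟨α, Z, hZ, rfl⟩, ?_⟩
    rintro _ ⟨α', Z', hZ', rfl⟩
    exact hmin α' Z' hZ'
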